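/- For all w1, w2 ∈ H^1 one has S(w1 *̄ w2) = S(w1) * S(w2); that is, S is a ℚ-algebra isomorphism from (H^1, *̄) to (H^1, *). -/

import Mathlib

open scoped BigOperators

/-- The two-letter alphabet {x, y}. -/
inductive Letter : Type
  | x : Letter
  | y : Letter
deriving DecidableEq

/-- `H = ℚ⟨x,y⟩`, the noncommutative polynomial ring over ℚ in two
indeterminates, realized as the monoid algebra of the free monoid on `{x,y}`. -/
abbrev H : Type := MonoidAlgebra ℚ (FreeMonoid Letter)

namespace H

/-- The monomial (word) of `H` corresponding to an element of the free monoid. -/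
noncomputable def word (w : FreeMonoid Letter) : H := MonoidAlgebra.single w 1

/-- The generator `x`. -/
noncomputable def X : H := word (FreeMonoid.of Letter.x)

/-- The generator `y`. -/
noncomputable def Y : H := word (FreeMonoid.of Letter.y)

/-- The word `z_k = x^{k-1} y` (for `k ≥ 1`). -/
def zW (k : ℕ) : FreeMonoid Letter :=
  FreeMonoid.ofList (List.replicate (k - 1) Letter.x ++ [Letter.y])

/-- `z_k = x^{k-1} y` as an element of `H`. -/
noncomputable def z (k : ℕ) : H := word (zW k)

/-- A list `[k₁,…,kₙ]` gives the word `z_{k₁} z_{k₂} ⋯ z_{kₙ}`. -/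
def zListW (ks : List ℕ) : FreeMonoid Letter :=
  FreeMonoid.ofList (ks.flatMap fun k => List.replicate (k - 1) Letter.x ++ [Letter.y])

/-- `H¹ = ℚ + Hy` as a ℚ-submodule of `H`. -/
noncomputable def H1 : Submodule ℚ H :=
  LinearMap.range (LinearMap.mulRight ℚ Y) ⊔ Submodule.span ℚ {1}

/-- `H⁰ = ℚ + xHy` as a ℚ-submodule of `H`. -/
noncomputable def H0 : Submodule ℚ H :=
  LinearMap.range ((LinearMap.mulRight ℚ Y).comp (LinearMap.mulLeft ℚ X)) ⊔
    Submodule.span ℚ {1}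

/-- Parse a word of `H¹` into the exponent list of its `z`-decomposition:
`z_{k₁}⋯z_{kₙ} ↦ [k₁,…,kₙ]` (auxiliary accumulator version). -/
def toZAux : List Letter → ℕ → List ℕ
  | [], _ => []
  | Letter.x :: r, n => toZAux r (n + 1)
  | Letter.y :: r, n => (n + 1) :: toZAux r 0

/-- The `z`-decomposition of a word of `H¹`. -/
def toZ (w : FreeMonoid Letter) : List ℕ := toZAux (FreeMonoid.toList w) 0

/-- The harmonic product on words of `H¹` (via `z`-decompositions):
`1 * w = w * 1 = w` and
`z_k w₁ * z_l w₂ = z_k (w₁ * z_l w₂) + z_l (z_k w₁ * w₂) + z_{k+l} (w₁ * w₂)`. -/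
noncomputable def harmW : List ℕ → List ℕ → H
  | [], w => word (zListW w)
  | k :: w1, [] => word (zListW (k :: w1))
  | k :: w1, l :: w2 =>
      z k * harmW w1 (l :: w2) + z l * harmW (k :: w1) w2 + z (k + l) * harmW w1 w2
termination_by w1 w2 => w1.length + w2.length
decreasing_by all_goals simp [Nat.lt_succ_iff] <;> omega

/-- The n-harmonic product on words of `H¹`:
`1 *̄ w = w *̄ 1 = w` and
`z_k w₁ *̄ z_l w₂ = z_k (w₁ *̄ z_l w₂) + z_l (z_k w₁ *̄ w₂) − z_{k+l} (w₁ *̄ w₂)`. -/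
noncomputable def nharmW : List ℕ → List ℕ → H
  | [], w => word (zListW w)
  | k :: w1, [] => word (zListW (k :: w1))
  | k :: w1, l :: w2 =>
      z k * nharmW w1 (l :: w2) + z l * nharmW (k :: w1) w2 - z (k + l) * nharmW w1 w2
termination_by w1 w2 => w1.length + w2.length
decreasing_by all_goals simp [Nat.lt_succ_iff] <;> omega

/-- The harmonic product `*` on `H¹`, extended ℚ-bilinearly. -/
noncomputable def harm (a b : H) : H :=
  Finsupp.sum a.coeff fun w1 c1 =>
    Finsupp.sum b.coeff fun w2 c2 => (c1 * c2) • harmW (toZ w1) (toZ w2)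

/-- The n-harmonic product `*̄` on `H¹`, extended ℚ-bilinearly. -/
noncomputable def nharm (a b : H) : H :=
  Finsupp.sum a.coeff fun w1 c1 =>
    Finsupp.sum b.coeff fun w2 c2 => (c1 * c2) • nharmW (toZ w1) (toZ w2)

/-- The letter exchange `τ(x) = y`, `τ(y) = x`. -/
def τ : Letter → Letter
  | Letter.x => Letter.y
  | Letter.y => Letter.x

/-- `δ(w) = 1` if `w` is the empty word, `0` otherwise. -/
def δ : List Letter → ℚ
  | [] => 1
  | _ :: _ => 0

/-- The shuffle product on words:
`1 ш w = w ш 1 = w` and `u₁w₁ ш u₂w₂ = u₁(w₁ ш u₂w₂) + u₂(u₁w₁ ш w₂)`. -/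
noncomputable def shW : List Letter → List Letter → H
  | [], w => word (FreeMonoid.ofList w)
  | u :: w, [] => word (FreeMonoid.ofList (u :: w))
  | u1 :: w1, u2 :: w2 =>
      word (FreeMonoid.of u1) * shW w1 (u2 :: w2) +
        word (FreeMonoid.of u2) * shW (u1 :: w1) w2
termination_by w1 w2 => w1.length + w2.length
decreasing_by all_goals simp [Nat.lt_succ_iff]

/-- The n-shuffle product on words: `1 ш̄ w = w ш̄ 1 = w` and
`u₁w₁ ш̄ u₂w₂ = u₁(w₁ ш̄ u₂w₂) + u₂(u₁w₁ ш̄ w₂) − δ(w₁)τ(u₁)u₂w₂ − δ(w₂)τ(u₂)u₁w₁`. -/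
noncomputable def nshW : List Letter → List Letter → H
  | [], w => word (FreeMonoid.ofList w)
  | u :: w, [] => word (FreeMonoid.ofList (u :: w))
  | u1 :: w1, u2 :: w2 =>
      word (FreeMonoid.of u1) * nshW w1 (u2 :: w2) +
        word (FreeMonoid.of u2) * nshW (u1 :: w1) w2 -
        δ w1 • word (FreeMonoid.ofList (τ u1 :: u2 :: w2)) -
        δ w2 • word (FreeMonoid.ofList (τ u2 :: u1 :: w1))
termination_by w1 w2 => w1.length + w2.length
decreasing_by all_goals simp [Nat.lt_succ_iff]

/-- The shuffle product `ш` on `H`, extended ℚ-bilinearly. -/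
noncomputable def sh (a b : H) : H :=
  Finsupp.sum a.coeff fun w1 c1 =>
    Finsupp.sum b.coeff fun w2 c2 =>
      (c1 * c2) • shW (FreeMonoid.toList w1) (FreeMonoid.toList w2)

/-- The n-shuffle product `ш̄` on `H`, extended ℚ-bilinearly. -/
noncomputable def nsh (a b : H) : H :=
  Finsupp.sum a.coeff fun w1 c1 =>
    Finsupp.sum b.coeff fun w2 c2 =>
      (c1 * c2) • nshW (FreeMonoid.toList w1) (FreeMonoid.toList w2)

/-- `S₁`: the ℚ-algebra endomorphism of `H` with `S₁(x) = x`, `S₁(y) = x + y`. -/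
noncomputable def S1 : H →ₐ[ℚ] H :=
  MonoidAlgebra.lift ℚ H (FreeMonoid Letter)
    (FreeMonoid.lift fun u => match u with
      | Letter.x => X
      | Letter.y => X + Y)

/-- `S₂`: the ℚ-algebra endomorphism of `H` with `S₂(x) = x`, `S₂(y) = y − x`. -/
noncomputable def S2 : H →ₐ[ℚ] H :=
  MonoidAlgebra.lift ℚ H (FreeMonoid Letter)
    (FreeMonoid.lift fun u => match u with
      | Letter.x => X
      | Letter.y => Y - X)

/-- `S` on a word: `S(1) = 1` and `S(Fy) = S₁(F)y`. -/
noncomputable def SW (w : FreeMonoid Letter) : H :=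
  match (FreeMonoid.toList w).getLast? with
  | some Letter.y =>
      S1 (word (FreeMonoid.ofList (FreeMonoid.toList w).dropLast)) * Y
  | _ => word w

/-- The ℚ-linear map `S : H¹ → H¹` with `S(1) = 1`, `S(Fy) = S₁(F)y`. -/
noncomputable def S (a : H) : H := Finsupp.sum a.coeff fun w c => c • SW w

/-- `S̃` on a word: `S̃(1) = 1` and `S̃(Fy) = S₂(F)y`. -/
noncomputable def StW (w : FreeMonoid Letter) : H :=
  match (FreeMonoid.toList w).getLast? with
  | some Letter.y =>
      S2 (word (FreeMonoid.ofList (FreeMonoid.toList w).dropLast)) * Y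
  | _ => word w

/-- The ℚ-linear map `S̃ : H¹ → H¹` with `S̃(1) = 1`, `S̃(Fy) = S₂(F)y`. -/
noncomputable def St (a : H) : H := Finsupp.sum a.coeff fun w c => c • StW w

/-- The multiple zeta value `ζ(k₁,…,kₙ)`: the sum over strictly decreasing
tuples `m₁ > m₂ > ⋯ > mₙ > 0` of `1/(m₁^{k₁}⋯mₙ^{kₙ})`. -/
noncomputable def mzeta (ks : List ℕ) : ℝ :=
  ∑' m : {f : Fin ks.length → ℕ // (∀ i, 0 < f i) ∧
      ∀ i j : Fin ks.length, i < j → f j < f i},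
    ∏ i : Fin ks.length, ((m.1 i : ℝ) ^ ks.get i)⁻¹

/-- The non-strict multiple zeta value `ζ̄(k₁,…,kₙ)`: the sum over weakly
decreasing tuples `m₁ ≥ m₂ ≥ ⋯ ≥ mₙ > 0` of `1/(m₁^{k₁}⋯mₙ^{kₙ})`. -/
noncomputable def nmzeta (ks : List ℕ) : ℝ :=
  ∑' m : {f : Fin ks.length → ℕ // (∀ i, 0 < f i) ∧
      ∀ i j : Fin ks.length, i ≤ j → f j ≤ f i},
    ∏ i : Fin ks.length, ((m.1 i : ℝ) ^ ks.get i)⁻¹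

/-- The evaluation map `Z : H⁰ → ℝ`, `Z(1) = 1`,
`Z(z_{k₁}⋯z_{kₙ}) = ζ(k₁,…,kₙ)` (extended ℚ-linearly to `H`). -/
noncomputable def Z (a : H) : ℝ := Finsupp.sum a.coeff fun w c => (c : ℝ) * mzeta (toZ w)

/-- The n-evaluation map `Z̄ : H⁰ → ℝ`, `Z̄(1) = 1`,
`Z̄(z_{k₁}⋯z_{kₙ}) = ζ̄(k₁,…,kₙ)` (extended ℚ-linearly to `H`). -/
noncomputable def Zbar (a : H) : ℝ := Finsupp.sum a.coeff fun w c => (c : ℝ) * nmzeta (toZ w)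

/-- `i`-fold n-harmonic power: `a^{*̄ 0} = 1`, `a^{*̄ (i+1)} = a *̄ a^{*̄ i}`. -/
noncomputable def nharmPow : ℕ → H → H
  | 0, _ => 1
  | i + 1, a => nharm a (nharmPow i a)

/-- `i`-fold n-shuffle power: `a^{ш̄ 0} = 1`, `a^{ш̄ (i+1)} = a ш̄ a^{ш̄ i}`. -/
noncomputable def nshPow : ℕ → H → H
  | 0, _ => 1
  | i + 1, a => nsh a (nshPow i a)

end H

open H

namespace HProof

/-- The free module on lists of positive integers. -/
abbrev A : Type := List ℕ+ →₀ ℚ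

/-- Basis element. -/
noncomputable def e (l : List ℕ+) : A := Finsupp.single l 1

/-- Linear extension from the basis of `A`. -/
noncomputable def ext {M : Type*} [AddCommGroup M] [Module ℚ M] (f : List ℕ+ → M) : A →ₗ[ℚ] M :=
  Finsupp.linearCombination ℚ f

@[simp] lemma ext_e {M : Type*} [AddCommGroup M] [Module ℚ M] (f : List ℕ+ → M) (l : List ℕ+) :
    ext f (e l) = f l := by
  simp [ext, e]

lemma A_hom_ext {M : Type*} [AddCommGroup M] [Module ℚ M] {f g : A →ₗ[ℚ] M}
    (h : ∀ l, f (e l) = g (e l)) : f = g := by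
  apply Finsupp.lhom_ext'
  intro l
  apply LinearMap.ext_ring
  exact h l

/-- Prepending `z_k`. -/
noncomputable def C (k : ℕ+) : A →ₗ[ℚ] A := ext fun l => e (k :: l)

/-- Adding `k` to the first entry, killing the empty word. -/
noncomputable def P (k : ℕ+) : A →ₗ[ℚ] A := ext fun l => match l with
  | [] => 0
  | m :: r => e ((k + m) :: r)

@[simp] lemma C_e (k : ℕ+) (l : List ℕ+) : C k (e l) = e (k :: l) := by simp [C]
@[simp] lemma P_nil (k : ℕ+) : P k (e []) = 0 := by simp [P]
@[simp] lemma P_cons (k m : ℕ+) (l : List ℕ+) : P k (e (m :: l)) = e ((k + m) :: l) := by simp [P]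
@[simp] lemma P_C (k m : ℕ+) (a : A) : P k (C m a) = C (k + m) a := by
  have : (P k).comp (C m) = C (k + m) := A_hom_ext (by simp)
  exact DFunLike.congr_fun this a

/-- Deformed quasi-shuffle product on words. -/
noncomputable def hW (t : ℚ) : List ℕ+ → List ℕ+ → A
  | [], w => e w
  | k :: w1, [] => e (k :: w1)
  | k :: w1, l :: w2 =>
      C k (hW t w1 (l :: w2)) + C l (hW t (k :: w1) w2) + t • C (k + l) (hW t w1 w2)
termination_by w1 w2 => w1.length + w2.length
decreasing_by all_goals simp [Nat.lt_succ_iff] <;> omega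

/-- Bilinear extension. -/
noncomputable def hA (t : ℚ) : A →ₗ[ℚ] A →ₗ[ℚ] A := ext fun u => ext fun v => hW t u v

lemma hA_e (t : ℚ) (u v : List ℕ+) : hA t (e u) (e v) = hW t u v := by simp [hA]

@[simp] lemma hW_nil_left (t : ℚ) (v : List ℕ+) : hW t [] v = e v := by simp [hW]
@[simp] lemma hW_nil_right (t : ℚ) (v : List ℕ+) : hW t v [] = e v := by cases v <;> simp [hW]
lemma hW_cons (t : ℚ) (k l : ℕ+) (u v : List ℕ+) : hW t (k :: u) (l :: v) =
    C k (hW t u (l :: v)) + C l (hW t (k :: u) v) + t • C (k + l) (hW t u v) := by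
  rw [hW]

/-- The operator `z_k + x^k`. -/
noncomputable def Q (k : ℕ+) : A →ₗ[ℚ] A := C k + P k

lemma Q_apply (k : ℕ+) (a : A) : Q k a = C k a + P k a := rfl

lemma Q_mul_e (k l : ℕ+) (u v : List ℕ+) :
    hA 1 (Q k (e u)) (Q l (e v)) =
      Q k (hA 1 (e u) (Q l (e v))) + Q l (hA 1 (Q k (e u)) (e v)) -
        Q (k + l) (hA 1 (e u) (e v)) := by
  rcases u with _ | ⟨a, u⟩ <;> rcases v with _ | ⟨b, v⟩ <;>
  simp only [Q_apply, C_e, P_nil, P_cons, map_add, LinearMap.add_apply, hA_e, hW_cons, hW_nil_left,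
    hW_nil_right, P_C, one_smul, map_zero, LinearMap.zero_apply, add_zero, zero_add,
    @add_comm ℕ+ _, @add_left_comm ℕ+ _, @add_assoc ℕ+ _] <;> abel

lemma Q_mul (k l : ℕ+) (u v : A) :
    hA 1 (Q k u) (Q l v) =
      Q k (hA 1 u (Q l v)) + Q l (hA 1 (Q k u) v) - Q (k + l) (hA 1 u v) := by
  have : (hA 1).compl₁₂ (Q k) (Q l) =
      ((hA 1).compl₂ (Q l)).compr₂ (Q k) + ((hA 1).comp (Q k)).compr₂ (Q l)
        - (hA 1).compr₂ (Q (k + l)) := by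
    apply A_hom_ext; intro l; apply A_hom_ext; intro m
    simpa using Q_mul_e _ _ l m
  simpa using DFunLike.congr_fun (DFunLike.congr_fun this u) v

/-- `S` on words. -/
noncomputable def SL : List ℕ+ → A
  | [] => e []
  | k :: r => Q k (SL r)

/-- `S` on `A`. -/
noncomputable def SA : A →ₗ[ℚ] A := ext SL

lemma SA_C (k : ℕ+) (a : A) : SA (C k a) = Q k (SA a) := by
  have : SA.comp (C k) = (Q k).comp SA := A_hom_ext (by simp [SA, SL])
  exact DFunLike.congr_fun this a

lemma hA_one_left (t : ℚ) (a : A) : hA t (e []) a = a := by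
  have : hA t (e []) = LinearMap.id := A_hom_ext (by simp [hA_e])
  exact DFunLike.congr_fun this a

lemma hA_one_right (t : ℚ) (a : A) : hA t a (e []) = a := by
  have : (hA t).flip (e []) = LinearMap.id := A_hom_ext (by simp [hA_e])
  exact DFunLike.congr_fun this a

lemma SA_hW (u v : List ℕ+) : SA (hW (-1) u v) = hA 1 (SL u) (SL v) := by
  match u, v with
  | [], v => simp [SL, hA_one_left, SA]
  | k :: u, [] => simp [SL, hA_one_right, SA]
  | k :: u, l :: v =>
    rw [hW_cons, map_add, map_add, map_smul, SA_C, SA_C, SA_C, SA_hW, SA_hW, SA_hW]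
    simp only [SL]
    rw [Q_mul]
    module
termination_by u.length + v.length

lemma SA_hA (a b : A) : SA (hA (-1) a b) = hA 1 (SA a) (SA b) := by
  have : (hA (-1)).compr₂ SA = (hA 1).compl₁₂ SA SA := by
    apply A_hom_ext; intro l; apply A_hom_ext; intro m
    simpa [hA_e, SA] using SA_hW l m
  exact DFunLike.congr_fun (DFunLike.congr_fun this a) b

/-- Linear extension from words of `H`. -/
noncomputable def lin {M : Type*} [AddCommGroup M] [Module ℚ M] (f : FreeMonoid Letter → M) :
    H →ₗ[ℚ] M :=
  (Finsupp.linearCombination ℚ f).comp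
    (MonoidAlgebra.coeffLinearEquiv ℚ : H ≃ₗ[ℚ] (FreeMonoid Letter →₀ ℚ)).toLinearMap

lemma lin_apply {M : Type*} [AddCommGroup M] [Module ℚ M] (f : FreeMonoid Letter → M) (a : H) :
    lin f a = Finsupp.sum a.coeff fun w c => c • f w := rfl

lemma lin_word {M : Type*} [AddCommGroup M] [Module ℚ M] (f : FreeMonoid Letter → M)
    (w : FreeMonoid Letter) : lin f (word w) = f w := by
  simp [lin_apply, word]

lemma H_hom_ext {M : Type*} [AddCommGroup M] [Module ℚ M] {f g : H →ₗ[ℚ] M}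
    (h : ∀ l, f (word l) = g (word l)) : f = g := by
  apply MonoidAlgebra.lhom_ext'
  intro l
  apply LinearMap.ext_ring
  exact h l

lemma word_mul (u v : FreeMonoid Letter) : word (u * v) = word u * word v := by
  simp [word, MonoidAlgebra.single_mul_single]

lemma word_one : word 1 = 1 := rfl

lemma harm_eq (a b : H) :
    harm a b = lin (fun w1 => lin (fun w2 => harmW (toZ w1) (toZ w2))) a b := by
  simp only [lin_apply, harm, Finsupp.sum, LinearMap.sum_apply, LinearMap.smul_apply,
    Finset.smul_sum, smul_smul]

lemma nharm_eq (a b : H) :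
    nharm a b = lin (fun w1 => lin (fun w2 => nharmW (toZ w1) (toZ w2))) a b := by
  simp only [lin_apply, nharm, Finsupp.sum, LinearMap.sum_apply, LinearMap.smul_apply,
    Finset.smul_sum, smul_smul]

lemma S_eq (a : H) : S a = lin SW a := rfl
lemma St_eq (a : H) : St a = lin StW a := rfl

/-- The word attached to a list of positive integers. -/
def zl (l : List ℕ+) : FreeMonoid Letter := zListW (l.map (fun k : ℕ+ => (k : ℕ)))

/-- The realization map. -/
noncomputable def phi : A →ₗ[ℚ] H := ext fun l => word (zl l)

lemma phi_e (l : List ℕ+) : phi (e l) = word (zl l) := by simp [phi]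

lemma zl_cons (k : ℕ+) (l : List ℕ+) : zl (k :: l) = zW k * zl l := rfl

lemma zl_nil : zl [] = 1 := rfl

lemma phi_C (k : ℕ+) (a : A) : phi (C k a) = z k * phi a := by
  have : phi.comp (C k) = (LinearMap.mulLeft ℚ (z k)).comp phi :=
    A_hom_ext (by simp [phi_e, zl_cons, word_mul, z])
  exact DFunLike.congr_fun this a

lemma toZAux_rep (n m : ℕ) (r : List Letter) :
    toZAux (List.replicate n Letter.x ++ Letter.y :: r) m = (m + n + 1) :: toZAux r 0 := by
  induction n generalizing m with
  | zero => simp [toZAux]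
  | succ n ih => simp only [List.replicate_succ, List.cons_append, toZAux, ih]; congr 1; omega

lemma toZ_zl (l : List ℕ+) : toZ (zl l) = l.map (fun k : ℕ+ => (k : ℕ)) := by
  induction l with
  | nil => rfl
  | cons k l ih =>
    have : toZ (zl (k :: l)) = toZAux (List.replicate ((k : ℕ) - 1) Letter.x ++ Letter.y ::
      FreeMonoid.toList (zl l)) 0 := by
      simp [H.toZ, zl_cons, zW, FreeMonoid.toList_mul]
    rw [this, toZAux_rep]
    have hk := k.pos
    simp only [List.map_cons, ← ih, H.toZ]
    congr 1; omega

lemma harmW_eq (u v : List ℕ+) : harmW (u.map (fun k : ℕ+ => (k : ℕ)))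
    (v.map (fun k : ℕ+ => (k : ℕ))) = phi (hW 1 u v) := by
  match u, v with
  | [], v => simp [harmW, phi_e, zl]
  | k :: u, [] => simp [harmW, phi_e, zl]
  | k :: u, l :: v =>
    have h1 := harmW_eq u (l :: v)
    have h2 := harmW_eq (k :: u) v
    have h3 := harmW_eq u v
    simp only [List.map_cons] at h1 h2 ⊢
    rw [harmW, h1, h2, h3, hW_cons]
    simp only [map_add, map_smul, phi_C, one_smul, PNat.add_coe]
termination_by u.length + v.length

lemma nharmW_eq (u v : List ℕ+) : nharmW (u.map (fun k : ℕ+ => (k : ℕ)))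
    (v.map (fun k : ℕ+ => (k : ℕ))) = phi (hW (-1) u v) := by
  match u, v with
  | [], v => simp [nharmW, phi_e, zl]
  | k :: u, [] => simp [nharmW, phi_e, zl]
  | k :: u, l :: v =>
    have h1 := nharmW_eq u (l :: v)
    have h2 := nharmW_eq (k :: u) v
    have h3 := nharmW_eq u v
    simp only [List.map_cons] at h1 h2 ⊢
    rw [nharmW, h1, h2, h3, hW_cons]
    rw [map_add, map_add, map_smul, phi_C, phi_C, phi_C, neg_smul, one_smul, PNat.add_coe,
      sub_eq_add_neg]
termination_by u.length + v.length

lemma harm_phi (a b : A) : harm (phi a) (phi b) = phi (hA 1 a b) := by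
  rw [harm_eq]
  have : (lin (fun w1 => lin (fun w2 => harmW (toZ w1) (toZ w2)))).compl₁₂ phi phi =
      (hA 1).compr₂ phi := by
    apply A_hom_ext; intro l; apply A_hom_ext; intro m
    simp [phi_e, lin_word, toZ_zl, harmW_eq, hA_e]
  exact DFunLike.congr_fun (DFunLike.congr_fun this a) b

lemma nharm_phi (a b : A) : nharm (phi a) (phi b) = phi (hA (-1) a b) := by
  rw [nharm_eq]
  have : (lin (fun w1 => lin (fun w2 => nharmW (toZ w1) (toZ w2)))).compl₁₂ phi phi =
      (hA (-1)).compr₂ phi := by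
    apply A_hom_ext; intro l; apply A_hom_ext; intro m
    simp [phi_e, lin_word, toZ_zl, nharmW_eq, hA_e]
  exact DFunLike.congr_fun (DFunLike.congr_fun this a) b

lemma S_mul_Y (F : H) : S (F * Y) = S1 F * Y := by
  rw [S_eq]
  have : (lin SW).comp (LinearMap.mulRight ℚ Y) =
      (LinearMap.mulRight ℚ Y).comp S1.toLinearMap := by
    apply H_hom_ext
    intro w
    simp only [LinearMap.comp_apply, LinearMap.mulRight_apply, AlgHom.toLinearMap_apply]
    rw [Y, ← word_mul, lin_word]
    simp [SW, Y]
  exact DFunLike.congr_fun this F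

lemma St_mul_Y (F : H) : St (F * Y) = S2 F * Y := by
  rw [St_eq]
  have : (lin StW).comp (LinearMap.mulRight ℚ Y) =
      (LinearMap.mulRight ℚ Y).comp S2.toLinearMap := by
    apply H_hom_ext
    intro w
    simp only [LinearMap.comp_apply, LinearMap.mulRight_apply, AlgHom.toLinearMap_apply]
    rw [Y, ← word_mul, lin_word]
    simp [StW, Y]
  exact DFunLike.congr_fun this F

lemma S_one : S 1 = 1 := by
  rw [S_eq, ← word_one, lin_word]; simp [SW]

lemma St_one : St 1 = 1 := by
  rw [St_eq, ← word_one, lin_word]; simp [StW]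

lemma S1_X : S1 X = X := by simp [S1, X, word]
lemma S1_Y : S1 Y = X + Y := by simp [S1, Y, word]
lemma S2_X : S2 X = X := by simp [S2, X, word]
lemma S2_Y : S2 Y = Y - X := by simp [S2, Y, word]

lemma algHom_H_ext {f g : H →ₐ[ℚ] H} (hx : f X = g X) (hy : f Y = g Y) : f = g := by
  apply MonoidAlgebra.algHom_ext' (single_one_left := Subsingleton.elim _ _)
  apply FreeMonoid.hom_eq
  intro u
  cases u
  · exact hx
  · exact hy

lemma S1_S2 (F : H) : S1 (S2 F) = F := by
  have : S1.comp S2 = AlgHom.id ℚ H := algHom_H_ext (by simp [S1_X, S2_X])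
    (by simp [S2_Y, S1_Y, S1_X])
  exact DFunLike.congr_fun this F

lemma S2_S1 (F : H) : S2 (S1 F) = F := by
  have : S2.comp S1 = AlgHom.id ℚ H := algHom_H_ext (by simp [S1_X, S2_X])
    (by simp [S2_Y, S1_Y, S2_X])
  exact DFunLike.congr_fun this F

lemma mem_H1 (a : H) : a ∈ H1 ↔ ∃ (F : H) (c : ℚ), a = F * Y + c • (1 : H) := by
  simp only [H1, Submodule.mem_sup, LinearMap.mem_range, Submodule.mem_span_singleton]
  constructor
  · rintro ⟨_, ⟨F, rfl⟩, _, ⟨c, rfl⟩, rfl⟩; exact ⟨F, c, rfl⟩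
  · rintro ⟨F, c, rfl⟩; exact ⟨_, ⟨F, rfl⟩, _, ⟨c, rfl⟩, rfl⟩

lemma S_form (F : H) (c : ℚ) : S (F * Y + c • (1 : H)) = S1 F * Y + c • (1 : H) := by
  rw [← S_mul_Y, S_eq, map_add, map_smul, ← S_eq, ← S_eq, S_one]

lemma St_form (F : H) (c : ℚ) : St (F * Y + c • (1 : H)) = S2 F * Y + c • (1 : H) := by
  rw [← St_mul_Y, St_eq, map_add, map_smul, ← St_eq, ← St_eq, St_one]

lemma bij : Set.BijOn S (H1 : Set H) (H1 : Set H) := by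
  refine Set.InvOn.bijOn (f' := St) ⟨?_, ?_⟩ ?_ ?_
  · intro a ha
    obtain ⟨F, c, rfl⟩ := (mem_H1 a).1 ha
    rw [S_form, St_form, S2_S1]
  · intro a ha
    obtain ⟨F, c, rfl⟩ := (mem_H1 a).1 ha
    rw [St_form, S_form, S1_S2]
  · intro a ha
    obtain ⟨F, c, rfl⟩ := (mem_H1 a).1 ha
    rw [S_form]
    exact (mem_H1 _).2 ⟨_, _, rfl⟩
  · intro a ha
    obtain ⟨F, c, rfl⟩ := (mem_H1 a).1 ha
    rw [St_form]
    exact (mem_H1 _).2 ⟨_, _, rfl⟩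

lemma word_rep (n : ℕ) : word (FreeMonoid.ofList (List.replicate n Letter.x)) = X ^ n := by
  induction n with
  | zero => rfl
  | succ n ih =>
    rw [pow_succ', ← ih, X, ← word_mul]; rfl

lemma z_eq (k : ℕ) : z k = X ^ (k - 1) * Y := by
  rw [← word_rep, Y, ← word_mul]; rfl

lemma z_add (k m : ℕ+) : z ((k + m : ℕ+) : ℕ) = X ^ (k : ℕ) * z m := by
  rw [z_eq, z_eq, ← mul_assoc, ← pow_add]
  have := m.pos
  congr 2
  rw [PNat.add_coe]; omega

lemma S1_z (k : ℕ+) : S1 (z k) = z k + X ^ (k : ℕ) := by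
  rw [z_eq, map_mul, map_pow, S1_X, S1_Y, mul_add, ← pow_succ, add_comm]
  have := k.pos
  congr 2
  omega

lemma phi_P_P (k m : ℕ+) (a : A) : phi (P k (P m a)) = X ^ (k : ℕ) * phi (P m a) := by
  have : phi.comp ((P k).comp (P m)) = (LinearMap.mulLeft ℚ (X ^ (k : ℕ))).comp (phi.comp (P m)) := by
    apply A_hom_ext
    rintro (_ | ⟨n, l⟩)
    · simp
    · have h := z_add k (m + n)
      rw [z, z] at h
      simp only [LinearMap.comp_apply, LinearMap.mulLeft_apply, P_cons, phi_e, zl_cons, word_mul]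
      rw [h, mul_assoc]
  exact DFunLike.congr_fun this a

lemma phi_Q_Q (k m : ℕ+) (a : A) : phi (Q k (Q m a)) = S1 (z k) * phi (Q m a) := by
  rw [Q_apply k, map_add, phi_C, S1_z, add_mul]
  congr 1
  rw [Q_apply, map_add, map_add, map_add, phi_P_P, P_C, phi_C, phi_C, z_add, mul_add, mul_assoc]

lemma exists_Y (k : ℕ+) (l : List ℕ+) : ∃ F : H, word (zl (k :: l)) = F * Y := by
  induction l generalizing k with
  | nil => exact ⟨X ^ ((k : ℕ) - 1), by rw [zl_cons, zl_nil, mul_one, ← z_eq, z]⟩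
  | cons m l ih =>
    obtain ⟨F, hF⟩ := ih m
    exact ⟨z k * F, by rw [zl_cons, word_mul, hF, mul_assoc, z]⟩

lemma S_zl (l : List ℕ+) : S (word (zl l)) = phi (SL l) := by
  match l with
  | [] => rw [zl_nil, word_one, S_one, SL, phi_e, zl_nil, word_one]
  | [k] =>
    rw [zl_cons, zl_nil, mul_one, ← z, z_eq, S_mul_Y, map_pow, S1_X, ← z_eq]
    simp [SL, Q_apply, phi_e, zl_cons, zl_nil, z]
  | k :: m :: l =>
    have ih := S_zl (m :: l)
    obtain ⟨F, hF⟩ := exists_Y m l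
    rw [zl_cons, word_mul, ← z, hF, ← mul_assoc, S_mul_Y, map_mul, mul_assoc, ← S_mul_Y, ← hF, ih]
    simp only [SL]
    rw [phi_Q_Q]

lemma S_phi (a : A) : S (phi a) = phi (SA a) := by
  rw [S_eq]
  have : (lin SW).comp phi = phi.comp SA := A_hom_ext fun l => by
    have h := S_zl l
    rw [S_eq] at h
    simpa [phi_e, SA] using h
  exact DFunLike.congr_fun this a

lemma word_Y_mem (w : List Letter) :
    ∃ (k : ℕ+) (l : List ℕ+), word (FreeMonoid.ofList w) * Y = word (zl (k :: l)) := by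
  induction w with
  | nil => exact ⟨1, [], by rw [Y, ← word_mul]; rfl⟩
  | cons u w ih =>
    obtain ⟨k, l, h⟩ := ih
    rw [FreeMonoid.ofList_cons, word_mul, mul_assoc, h]
    cases u
    · refine ⟨1 + k, l, ?_⟩
      rw [zl_cons, zl_cons, word_mul, word_mul, ← z, ← z, z_add, ← X]
      simp [mul_assoc]
    · exact ⟨1, k :: l, by rw [← word_mul]; rfl⟩

lemma H1_phi (a : H) (ha : a ∈ H1) : ∃ b, phi b = a := by
  have h : H1 ≤ LinearMap.range phi := by
    refine sup_le ?_ ?_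
    · rintro _ ⟨F, rfl⟩
      induction F using MonoidAlgebra.induction_linear with
      | zero => simp
      | add f g hf hg => rw [map_add]; exact add_mem hf hg
      | single w c =>
        obtain ⟨k, l, h⟩ := word_Y_mem (FreeMonoid.toList w)
        refine ⟨c • e (k :: l), ?_⟩
        rw [map_smul, phi_e, ← h]
        simp [word, ← smul_mul_assoc]
    · rw [Submodule.span_singleton_le_iff_mem]
      exact ⟨e [], by rw [phi_e]; rfl⟩
  exact h ha

lemma main_hom (w1 : H) (h1 : w1 ∈ H1) (w2 : H) (h2 : w2 ∈ H1) :
    S (nharm w1 w2) = harm (S w1) (S w2) := by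
  obtain ⟨a, rfl⟩ := H1_phi w1 h1
  obtain ⟨b, rfl⟩ := H1_phi w2 h2
  rw [nharm_phi, S_phi, S_phi, S_phi, harm_phi, SA_hA]

end HProof


/-- `S(w₁ *̄ w₂) = S(w₁) * S(w₂)` for all `w₁, w₂ ∈ H¹`; together with the fact
that `S` maps `H¹` bijectively onto `H¹` (it is ℚ-linear by construction),
this says `S` is a ℚ-algebra isomorphism from `(H¹, *̄)` to `(H¹, *)`. -/
theorem S_nharm_to_harm :
    (∀ w1 ∈ H1, ∀ w2 ∈ H1, S (nharm w1 w2) = harm (S w1) (S w2)) ∧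
    Set.BijOn S (H1 : Set H) (H1 : Set H) := by
  exact ⟨HProof.main_hom, HProof.bij⟩
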